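/- Let G be a finite abelian group and let χ = ∑_λ c_λ λ be a generalized character of G (where λ ranges over the irreducible characters of G and c_λ ∈ ℤ) such that χ(x) is a sum of at most two roots of unity for every nonidentity x ∈ G. Then for any two irreducible characters η and θ of G, the coefficients satisfy |c_η − c_θ| ≤ 2. -/

import Mathlib

/-!
By orthogonality, `|G| (c η - c θ) = ∑ g, χ g (η⁻¹ g - θ⁻¹ g)`, and the term at `g = 1` vanishes, so
only values with `‖χ g‖ ≤ 2` contribute. For `η ≠ θ`, orthogonality also gives
`∑ g, ‖η⁻¹ g - θ⁻¹ g‖² = 2 |G|`. Cauchy–Schwarz then bounds `|c η - c θ|` by `2√2 < 3`, and since the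
coefficients are integers the difference is at most `2`. In place of Cauchy–Schwarz the proof sums
the inequality `2 t ≤ 3/2 + (2/3) t²`, which gives the bound `3/2 + 4/3 = 17/6 < 3`.
-/

def IsRootOfUnity (z : ℂ) : Prop := ∃ n : ℕ, 0 < n ∧ z ^ n = 1

def IsSumAtMostTwoRootsOfUnity (z : ℂ) : Prop :=
  z = 0 ∨ IsRootOfUnity z ∨ ∃ u v : ℂ, IsRootOfUnity u ∧ IsRootOfUnity v ∧ z = u + v

lemma IsRootOfUnity.norm_eq_one {z : ℂ} (h : IsRootOfUnity z) : ‖z‖ = 1 := by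
  obtain ⟨n, hn, hz⟩ := h
  exact Complex.norm_eq_one_of_pow_eq_one hz hn.ne'

lemma IsSumAtMostTwoRootsOfUnity.norm_le_two {z : ℂ} (h : IsSumAtMostTwoRootsOfUnity z) :
    ‖z‖ ≤ 2 := by
  rcases h with rfl | h | ⟨u, v, hu, hv, rfl⟩
  · simp
  · rw [h.norm_eq_one]; norm_num
  · have := norm_add_le u v
    rw [hu.norm_eq_one, hv.norm_eq_one] at this
    linarith

section Characters

variable {G : Type*} [CommGroup G] [Fintype G]

lemma norm_character (l : G →* ℂˣ) (g : G) : ‖(l g : ℂ)‖ = 1 := by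
  refine Complex.norm_eq_one_of_pow_eq_one (n := Fintype.card G) ?_ Fintype.card_ne_zero
  rw [← Units.val_pow_eq_pow_val, ← map_pow, pow_card_eq_one, map_one, Units.val_one]

lemma sum_character_eq_zero {l : G →* ℂˣ} (hl : l ≠ 1) : ∑ g, (l g : ℂ) = 0 := by
  refine sum_hom_units_eq_zero ((Units.coeHom ℂ).comp l) fun h => hl ?_
  ext g
  simpa using DFunLike.congr_fun h g

/-- The coefficient of `η` is recovered by pairing with `η⁻¹`. -/
lemma sum_mul_inv_character (c : (G →* ℂˣ) →₀ ℤ) (χ : G → ℂ)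
    (hχ : ∀ g : G, χ g = c.sum fun lam n => (n : ℂ) * (lam g : ℂ)) (η : G →* ℂˣ) :
    ∑ g, χ g * ((η⁻¹ : G →* ℂˣ) g : ℂ) = (Fintype.card G : ℂ) * c η := by
  have hswap : ∑ g, χ g * ((η⁻¹ : G →* ℂˣ) g : ℂ)
      = ∑ l ∈ c.support, (c l : ℂ) * ∑ g, ((l * η⁻¹ : G →* ℂˣ) g : ℂ) := by
    simp only [hχ, Finsupp.sum, Finset.sum_mul, Finset.mul_sum]
    rw [Finset.sum_comm]
    refine Finset.sum_congr rfl fun l _ => Finset.sum_congr rfl fun g _ => ?_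
    rw [MonoidHom.mul_apply, Units.val_mul, mul_assoc]
  rw [hswap, Finset.sum_eq_single η]
  · simp [mul_comm]
  · intro l _ hl
    rw [sum_character_eq_zero (mul_inv_eq_one.not.mpr hl), mul_zero]
  · intro h
    simp [Finsupp.notMem_support_iff.mp h]

lemma norm_sub_character_sq (a b : G →* ℂˣ) (g : G) :
    ‖(a g : ℂ) - b g‖ ^ 2 = 2 - 2 * ((a * b⁻¹ : G →* ℂˣ) g : ℂ).re := by
  have hb : ((b⁻¹ : G →* ℂˣ) g : ℂ) = (starRingEnd ℂ) (b g : ℂ) := by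
    rw [MonoidHom.inv_apply, Units.val_inv_eq_inv_val, Complex.inv_eq_conj (norm_character b g)]
  have h1 := norm_character a g
  have h2 := norm_character b g
  rw [MonoidHom.mul_apply, Units.val_mul, hb, ← Complex.normSq_eq_norm_sq, Complex.normSq_sub,
    Complex.normSq_eq_norm_sq, Complex.normSq_eq_norm_sq, h1, h2]
  norm_num

lemma sum_norm_sub_character_sq {a b : G →* ℂˣ} (hab : a ≠ b) :
    ∑ g, ‖(a g : ℂ) - b g‖ ^ 2 = 2 * Fintype.card G := by
  simp only [norm_sub_character_sq, Finset.sum_sub_distrib, ← Finset.mul_sum, ← Complex.re_sum]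
  rw [sum_character_eq_zero (mul_inv_eq_one.not.mpr hab)]
  simp [mul_comm]

end Characters

theorem stmt_16 {G : Type*} [CommGroup G] [Fintype G]
    (c : (G →* ℂˣ) →₀ ℤ) (χ : G → ℂ)
    -- χ = ∑_λ c_λ λ, a generalized character of G
    (hχ : ∀ g : G, χ g = c.sum fun lam n => (n : ℂ) * (lam g : ℂ))
    -- values on nonidentity elements are sums of at most two roots of unity
    (hval : ∀ x : G, x ≠ 1 → IsSumAtMostTwoRootsOfUnity (χ x)) :
    ∀ η θ : G →* ℂˣ, |c η - c θ| ≤ 2 := by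
  intro η θ
  rcases eq_or_ne η θ with rfl | hne
  · simp
  have hdiff : (Fintype.card G : ℂ) * ((c η - c θ : ℤ) : ℂ)
      = ∑ g, χ g * (((η⁻¹ : G →* ℂˣ) g : ℂ) - ((θ⁻¹ : G →* ℂˣ) g : ℂ)) := by
    simp only [mul_sub, Finset.sum_sub_distrib, sum_mul_inv_character c χ hχ]
    push_cast
    ring
  have hterm : ∀ g : G, ‖χ g * (((η⁻¹ : G →* ℂˣ) g : ℂ) - ((θ⁻¹ : G →* ℂˣ) g : ℂ))‖
      ≤ 3 / 2 + 2 / 3 * ‖((η⁻¹ : G →* ℂˣ) g : ℂ) - ((θ⁻¹ : G →* ℂˣ) g : ℂ)‖ ^ 2 := by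
    intro g
    rcases eq_or_ne g 1 with rfl | hg
    · simp; norm_num
    · rw [norm_mul]
      have h2 := (hval g hg).norm_le_two
      set t := ‖((η⁻¹ : G →* ℂˣ) g : ℂ) - ((θ⁻¹ : G →* ℂˣ) g : ℂ)‖
      have ht : 0 ≤ t := norm_nonneg _
      nlinarith [mul_le_mul_of_nonneg_right h2 ht, sq_nonneg (t - 3 / 2)]
  have hbound : (Fintype.card G : ℝ) * |((c η - c θ : ℤ) : ℝ)| ≤ Fintype.card G * (17 / 6) := by
    calc (Fintype.card G : ℝ) * |((c η - c θ : ℤ) : ℝ)|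
        = ‖(Fintype.card G : ℂ) * ((c η - c θ : ℤ) : ℂ)‖ := by
          rw [norm_mul, Complex.norm_natCast, Complex.norm_intCast]
      _ ≤ ∑ g : G, (3 / 2 + 2 / 3 *
            ‖((η⁻¹ : G →* ℂˣ) g : ℂ) - ((θ⁻¹ : G →* ℂˣ) g : ℂ)‖ ^ 2) := by
          rw [hdiff]
          exact norm_sum_le_of_le _ fun g _ => hterm g
      _ = Fintype.card G * (17 / 6) := by
          rw [Finset.sum_add_distrib, ← Finset.mul_sum,
            sum_norm_sub_character_sq (inv_injective.ne hne)]
          simp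
          ring
  have hcard : (0 : ℝ) < Fintype.card G := by exact_mod_cast Fintype.card_pos
  have hlt : |((c η - c θ : ℤ) : ℝ)| < 3 := by
    linarith [le_of_mul_le_mul_left hbound hcard]
  have hlt' : |c η - c θ| < 3 := by exact_mod_cast hlt
  omega
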